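/- For 1 < i < N, I ∈ S_i and any weight λ: e_i (f_I H_I + f_{I⁺} H_{I⁺} + f_{I⁻} H_{I⁻}) v_λ = 0 in M(λ). -/

import Mathlib

noncomputable section

open FreeAlgebra

/-- `𝕜 = F(q)`, the field of rational functions over `F`. -/
abbrev kk (F : Type) [Field F] : Type := RatFunc F

/-- The variable `q`. -/
def qq (F : Type) [Field F] : kk F := RatFunc.X

/-- `v = q²`. -/
def vv (F : Type) [Field F] : kk F := qq F ^ 2

/-- The balanced quantum integer `[n]_v`. -/
def qint (F : Type) [Field F] (n : ℤ) : kk F :=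
  (vv F ^ n - vv F ^ (-n)) / (vv F - (vv F)⁻¹)

/-- The quantum factorial `[m]_v!`. -/
def qfact (F : Type) [Field F] (m : ℕ) : kk F :=
  ∏ j ∈ Finset.Icc 1 m, qint F j

/-- The balanced Gaussian binomial coefficient `C(n,i)_v`. -/
def qbinom (F : Type) [Field F] (n i : ℕ) : kk F :=
  qfact F n / (qfact F i * qfact F (n - i))

/-- The Cartan matrix of `sl(N+1)`, with 1-based indices. -/
def cartan (i j : ℕ) : ℤ :=
  if i = j then 2 else if i + 1 = j ∨ j + 1 = i then -1 else 0

/-- Generators of `U_q(sl(N+1))`: `e i`, `f i`, `k i`, `kinv i` (0-based `i : Fin N`,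
corresponding to the 1-based index `i+1`). -/
inductive Gen (N : ℕ) : Type
  | e : Fin N → Gen N
  | f : Fin N → Gen N
  | k : Fin N → Gen N
  | kinv : Fin N → Gen N

/-- The defining relations of `U_q(sl(N+1))`. -/
inductive UqRel (F : Type) [Field F] (N : ℕ) :
    FreeAlgebra (kk F) (Gen N) → FreeAlgebra (kk F) (Gen N) → Prop
  | kkinv (i : Fin N) : UqRel F N (ι (kk F) (Gen.k i) * ι (kk F) (Gen.kinv i)) 1
  | kinvk (i : Fin N) : UqRel F N (ι (kk F) (Gen.kinv i) * ι (kk F) (Gen.k i)) 1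
  | kcomm (i j : Fin N) :
      UqRel F N (ι (kk F) (Gen.k i) * ι (kk F) (Gen.k j))
        (ι (kk F) (Gen.k j) * ι (kk F) (Gen.k i))
  | ke (i j : Fin N) :
      UqRel F N (ι (kk F) (Gen.k i) * ι (kk F) (Gen.e j) * ι (kk F) (Gen.kinv i))
        ((qq F ^ cartan ((i : ℕ) + 1) ((j : ℕ) + 1)) • ι (kk F) (Gen.e j))
  | kf (i j : Fin N) :
      UqRel F N (ι (kk F) (Gen.k i) * ι (kk F) (Gen.f j) * ι (kk F) (Gen.kinv i))
        ((qq F ^ (-cartan ((i : ℕ) + 1) ((j : ℕ) + 1))) • ι (kk F) (Gen.f j))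
  | ef (i j : Fin N) :
      UqRel F N (ι (kk F) (Gen.e i) * ι (kk F) (Gen.f j) - ι (kk F) (Gen.f j) * ι (kk F) (Gen.e i))
        (if i = j then
          ((qq F ^ 2 - qq F ^ (-2 : ℤ))⁻¹) •
            ((ι (kk F) (Gen.k i)) ^ 2 - (ι (kk F) (Gen.kinv i)) ^ 2)
        else 0)
  | serre_e_near (i j : Fin N) (h : (i : ℕ) + 1 = j ∨ (j : ℕ) + 1 = i) :
      UqRel F N
        ((ι (kk F) (Gen.e i)) ^ 2 * ι (kk F) (Gen.e j)
          - (qq F ^ 2 + qq F ^ (-2 : ℤ)) •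
              (ι (kk F) (Gen.e i) * ι (kk F) (Gen.e j) * ι (kk F) (Gen.e i))
          + ι (kk F) (Gen.e j) * (ι (kk F) (Gen.e i)) ^ 2) 0
  | serre_f_near (i j : Fin N) (h : (i : ℕ) + 1 = j ∨ (j : ℕ) + 1 = i) :
      UqRel F N
        ((ι (kk F) (Gen.f i)) ^ 2 * ι (kk F) (Gen.f j)
          - (qq F ^ 2 + qq F ^ (-2 : ℤ)) •
              (ι (kk F) (Gen.f i) * ι (kk F) (Gen.f j) * ι (kk F) (Gen.f i))
          + ι (kk F) (Gen.f j) * (ι (kk F) (Gen.f i)) ^ 2) 0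
  | serre_e_far (i j : Fin N) (h : (i : ℕ) + 1 < j ∨ (j : ℕ) + 1 < i) :
      UqRel F N (ι (kk F) (Gen.e i) * ι (kk F) (Gen.e j))
        (ι (kk F) (Gen.e j) * ι (kk F) (Gen.e i))
  | serre_f_far (i j : Fin N) (h : (i : ℕ) + 1 < j ∨ (j : ℕ) + 1 < i) :
      UqRel F N (ι (kk F) (Gen.f i) * ι (kk F) (Gen.f j))
        (ι (kk F) (Gen.f j) * ι (kk F) (Gen.f i))

/-- The quantized enveloping algebra `U = U_q(sl(N+1))`. -/
abbrev Uq (F : Type) [Field F] (N : ℕ) : Type := RingQuot (UqRel F N)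

variable (F : Type) [Field F] (N : ℕ)

/-- The image of a generator in `U`. -/
def gen (g : Gen N) : Uq F N := RingQuot.mkAlgHom (kk F) (UqRel F N) (ι (kk F) g)

/-- `e_i` (1-based index `1 ≤ i ≤ N`; junk value `0` outside this range). -/
def egen (i : ℕ) : Uq F N :=
  if h : 1 ≤ i ∧ i ≤ N then gen F N (Gen.e ⟨i - 1, by omega⟩) else 0

/-- `f_i` (1-based index). -/
def fgen (i : ℕ) : Uq F N :=
  if h : 1 ≤ i ∧ i ≤ N then gen F N (Gen.f ⟨i - 1, by omega⟩) else 0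

/-- `k_i` (1-based index). -/
def kgen (i : ℕ) : Uq F N :=
  if h : 1 ≤ i ∧ i ≤ N then gen F N (Gen.k ⟨i - 1, by omega⟩) else 0

/-- `k_i⁻¹` (1-based index). -/
def kinvgen (i : ℕ) : Uq F N :=
  if h : 1 ≤ i ∧ i ≤ N then gen F N (Gen.kinv ⟨i - 1, by omega⟩) else 0

/-- Auxiliary recursion: `fword i d = f_{i, i+1+d}`. -/
def fword (i : ℕ) : ℕ → Uq F N
  | 0 => fgen F N i
  | d + 1 =>
      qq F • (fword i d * fgen F N (i + 1 + d)) -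
        (qq F)⁻¹ • (fgen F N (i + 1 + d) * fword i d)

/-- The quantum root vector `f_{i,j}` (for `1 ≤ i < j ≤ N+1`). -/
def fij (i j : ℕ) : Uq F N := fword F N i (j - i - 1)

/-- Product of `f_{a,b}` over successive entries of a list. -/
def fList : List ℕ → Uq F N
  | a :: b :: rest => fij F N a b * fList (b :: rest)
  | _ => 1

/-- `f_S` for a finite set `S` of indices. -/
def fSet (S : Finset ℕ) : Uq F N := fList F N (S.sort (· ≤ ·))

/-- The index set `𝕀` of subsets of `{1,…,N+1}` containing `1` and `N+1`. -/
def II : Finset (Finset ℕ) :=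
  (Finset.Icc 1 (N + 1)).powerset.filter fun I => 1 ∈ I ∧ N + 1 ∈ I

/-- `r(I) = {s - 1 : s ∈ {1,…,N+1} \ I}`. -/
def rSet (I : Finset ℕ) : Finset ℕ := (Finset.Icc 1 (N + 1) \ I).image (· - 1)

/-- `k_{σ_i} = k_1 ⋯ k_i`. -/
def kσ (i : ℕ) : Uq F N := ((List.range i).map fun j => kgen F N (j + 1)).prod

/-- `K_{σ_i} = k_{σ_i}²`. -/
def Kσ (i : ℕ) : Uq F N := kσ F N i ^ 2

/-- `k_{σ_i}⁻¹ = k_1⁻¹ ⋯ k_i⁻¹`. -/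
def kσinv (i : ℕ) : Uq F N := ((List.range i).map fun j => kinvgen F N (j + 1)).prod

/-- `K_{σ_i}⁻¹`. -/
def KσInv (i : ℕ) : Uq F N := kσinv F N i ^ 2

/-- The element `h_i = -q⁻¹ v^{-(i-1)} K_{σ_i}⁻¹ (K_{σ_i} v^i - K_{σ_i}⁻¹ v^{-i})/(v - v⁻¹) ∈ U`. -/
def hElt (i : ℕ) : Uq F N :=
  (-(qq F)⁻¹ * vv F ^ (1 - (i : ℤ)) * (vv F - (vv F)⁻¹)⁻¹) •
    (KσInv F N i * (vv F ^ (i : ℤ) • Kσ F N i - vv F ^ (-(i : ℤ)) • KσInv F N i))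

/-- `H_I = ∏_{i ∈ r(I)} h_i` (product taken in increasing order of indices). -/
def HI (I : Finset ℕ) : Uq F N := (((rSet N I).sort (· ≤ ·)).map (hElt F N)).prod

/-- A weight `λ` is recorded by its values `(λ, α_j)` for `1 ≤ j ≤ N`;
`pairσ lam i = (λ, σ_i) = (λ, α_1 + ⋯ + α_i)`. -/
def pairσ (lam : ℕ → ℤ) (i : ℕ) : ℤ := ∑ j ∈ Finset.Icc 1 i, lam j

/-- The scalar `h_i(λ) = -q⁻¹ v^{-((λ,σ_i)+i-1)} [(λ,σ_i)+i]_v`. -/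
def hval (lam : ℕ → ℤ) (i : ℕ) : kk F :=
  -(qq F)⁻¹ * vv F ^ (-(pairσ lam i + (i : ℤ) - 1)) * qint F (pairσ lam i + (i : ℤ))

/-- The scalar `H_I(λ) = ∏_{i ∈ r(I)} h_i(λ)`. -/
def HIval (lam : ℕ → ℤ) (I : Finset ℕ) : kk F := ∏ i ∈ rSet N I, hval F lam i

/-- The left ideal `J_λ` of `U` generated by `e_1, …, e_N` and the `k_j - q^{(λ,α_j)}`. -/
def vermaIdeal (lam : ℕ → ℤ) : Submodule (Uq F N) (Uq F N) :=
  Submodule.span (Uq F N)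
    ({x | ∃ j, 1 ≤ j ∧ j ≤ N ∧ x = egen F N j} ∪
      {x | ∃ j, 1 ≤ j ∧ j ≤ N ∧
        x = kgen F N j - algebraMap (kk F) (Uq F N) (qq F ^ lam j)})

/-- The Verma module `M(λ) = U/J_λ`. -/
abbrev Verma (lam : ℕ → ℤ) : Type := Uq F N ⧸ vermaIdeal F N lam

/-- The highest weight vector `v_λ`, the image of `1` in `M(λ)`. -/
def hw (lam : ℕ → ℤ) : Verma F N lam := Submodule.Quotient.mk 1

/-- The candidate Shapovalov element `Θ_η = Σ_{I ∈ 𝕀} f_I H_I`. -/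
def Theta : Uq F N := ∑ I ∈ II N, fSet F N I * HI F N I

/-- `D^n(λ)`: the `(n-1) × (n-1)` matrix over `U` with `(i,j)` entry (1-based)
`f_{i,j+1}` if `i ≤ j`, `-h_j(λ)·1` if `i = j+1`, and `0` otherwise. -/
def Dmat (lam : ℕ → ℤ) (n : ℕ) : Matrix (Fin (n - 1)) (Fin (n - 1)) (Uq F N) :=
  Matrix.of fun i j =>
    if (i : ℕ) ≤ (j : ℕ) then fij F N ((i : ℕ) + 1) ((j : ℕ) + 2)
    else if (i : ℕ) = (j : ℕ) + 1 then
      -(algebraMap (kk F) (Uq F N) (hval F lam ((j : ℕ) + 1)))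
    else 0

/-- The left-to-right determinant of a matrix with noncommutative entries. -/
def ldet {m : ℕ} (B : Matrix (Fin m) (Fin m) (Uq F N)) : Uq F N :=
  ∑ w : Equiv.Perm (Fin m),
    ((Equiv.Perm.sign w : ℤˣ) : ℤ) • ((List.finRange m).map fun j => B (w j) j).prod

end

section helpers

/-- q-commutation: `x y = c y x`. -/
def QC {K A : Type*} [Field K] [Ring A] [Algebra K A] (c : K) (x y : A) : Prop :=
  x * y = c • (y * x)

section generic
variable {K A M : Type*} [Field K] [Ring A] [Algebra K A] [AddCommGroup M] [Module K M]
  [Module A M] [IsScalarTower K A M]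

lemma QC.mul {c d : K} {x y z : A} (h1 : QC c x y) (h2 : QC d x z) : QC (c * d) x (y * z) := by
  unfold QC at *
  rw [← mul_assoc, h1, smul_mul_assoc, mul_assoc, h2, mul_smul_comm, smul_smul, mul_assoc]

lemma QC.comb {c d r s : K} {x y z : A} (h1 : QC c x y) (h2 : QC d x z) :
    QC (c * d) x (r • (y * z) - s • (z * y)) := by
  have h3 := h1.mul h2
  have h4 := h2.mul h1
  unfold QC at *
  rw [mul_sub, mul_smul_comm, mul_smul_comm, h3, h4, sub_mul, smul_sub, smul_mul_assoc,
    smul_mul_assoc, smul_comm r, smul_comm s, mul_comm d c]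

lemma QC.one_right {x : A} : QC (1 : K) x 1 := by simp [QC]

lemma QC.zero_right {c : K} {x : A} : QC c x 0 := by simp [QC]

lemma QC.zero_left {c : K} {x : A} : QC c 0 x := by simp [QC]

lemma QC.smul_vec {c : K} {x y : A} (h : QC c x y) (m : M) : x • y • m = c • y • x • m := by
  unfold QC at h
  rw [← mul_smul, h, smul_assoc, mul_smul]

lemma smul_smul_vec (c : K) (x : A) (m : M) : x • c • m = c • x • m := by
  rw [← algebraMap_smul A c m, ← mul_smul, ← Algebra.commutes, mul_smul, algebraMap_smul]

lemma core (q c : K) (e f k k' p g fa fb P : A) (hq : q ≠ 0)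
    (w : M) (L L' s h h' : K)
    (hew : e • w = 0) (hk : k • k • w = L • w) (hk' : k' • k' • w = L' • w)
    (hP : QC (1:K) e P) (hp : QC (1:K) e p) (hg : QC (1:K) e g)
    (hkg : QC q k g) (hkg' : QC q⁻¹ k' g) (hkp : QC q k p) (hkp' : QC q⁻¹ k' p)
    (hef : e * f = f * e + c • (k ^ 2 - k' ^ 2))
    (hfa : fa = q • (p * f) - q⁻¹ • (f * p))
    (hfb : e * fb = fb * e + q • (g * k ^ 2))
    (hid : s * c * (q^2 * L - q⁻¹^2 * L') + s * h * (c * (q⁻¹ ^ 3 - q) * q⁻¹ ^ 2 * L')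
      + s * h' * (q * L) = 0) :
    e • ((P * p * f * g) • s • w + (P * fa * g) • (s * h) • w + (P * p * fb) • (s * h') • w) = 0 := by
  have hef' : ∀ x : M, e • f • x = f • e • x + c • (k • k • x - k' • k' • x) := by
    intro x
    rw [← mul_smul, hef, add_smul, mul_smul, smul_assoc, sub_smul, pow_two, pow_two, mul_smul,
      mul_smul]
  have hfb' : ∀ x : M, e • fb • x = fb • e • x + q • g • k • k • x := by
    intro x
    rw [← mul_smul, hfb, add_smul, mul_smul, smul_assoc, pow_two, mul_smul, mul_smul]
  have hs : ∀ (c : K) (x : A) (m : M), x • c • m = c • x • m := smul_smul_vec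
  subst hfa
  simp only [mul_smul, sub_smul, smul_assoc, smul_add, smul_sub, hP.smul_vec, hp.smul_vec,
    hg.smul_vec, hkg.smul_vec, hkg'.smul_vec, hkp.smul_vec, hkp'.smul_vec, hef', hfb',
    hs, hew, hk, hk', smul_zero, one_smul]
  have : ∀ (x : M) (z : K), z = 0 → z • x = 0 := by intro x z hz; rw [hz, zero_smul]
  refine Eq.trans ?_ (this (P • p • g • w) _ hid)
  generalize P • p • g • w = x
  match_scalars
  field_simp
  ring

lemma gen_base (q : K) (hq : q ≠ 0) (hv' : q ^ 4 - 1 ≠ 0) (e f g k k' : A)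
    (h1 : e * f = f * e + (q ^ 2 - (q ^ 2)⁻¹)⁻¹ • (k ^ 2 - k' ^ 2))
    (h2 : QC (1 : K) e g) (h3 : QC q k g) (h4 : QC q⁻¹ k' g) :
    e * (q • (f * g) - q⁻¹ • (g * f)) =
      (q • (f * g) - q⁻¹ • (g * f)) * e + q • (g * k ^ 2) := by
  have h5 : k ^ 2 * g = (q ^ 2) • (g * k ^ 2) := by
    unfold QC at h3
    rw [pow_two, mul_assoc, h3, mul_smul_comm, ← mul_assoc, h3, smul_mul_assoc, smul_smul,
      mul_assoc, pow_two]
  have h6 : k' ^ 2 * g = (q ^ 2)⁻¹ • (g * k' ^ 2) := by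
    unfold QC at h4
    rw [pow_two, mul_assoc, h4, mul_smul_comm, ← mul_assoc, h4, smul_mul_assoc, smul_smul,
      mul_assoc, pow_two, mul_inv]
  unfold QC at h2
  rw [one_smul] at h2
  have h7 : e * (f * g) = f * g * e + (q ^ 2 - (q ^ 2)⁻¹)⁻¹ •
      ((q ^ 2) • (g * k ^ 2) - (q ^ 2)⁻¹ • (g * k' ^ 2)) := by
    rw [← mul_assoc, h1, add_mul, mul_assoc, h2, smul_mul_assoc, sub_mul, h5, h6, mul_assoc]
  have h8 : e * (g * f) = g * f * e + (q ^ 2 - (q ^ 2)⁻¹)⁻¹ •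
      (g * k ^ 2 - g * k' ^ 2) := by
    rw [← mul_assoc, h2, mul_assoc, h1, mul_add, mul_smul_comm, mul_sub, mul_assoc]
  rw [mul_sub, mul_smul_comm, mul_smul_comm, h7, h8, sub_mul, smul_mul_assoc, smul_mul_assoc]
  generalize f * g * e = x1
  generalize g * f * e = x2
  generalize g * k ^ 2 = x3
  generalize g * k' ^ 2 = x4
  match_scalars <;> (field_simp; try ring)

lemma gen_step (q : K) (e g k x y : A)
    (ih : e * x = x * e + q • (y * k ^ 2))
    (h2 : QC (1 : K) e g) (h3 : QC (1 : K) k g) :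
    e * (q • (x * g) - q⁻¹ • (g * x)) =
      (q • (x * g) - q⁻¹ • (g * x)) * e + q • ((q • (y * g) - q⁻¹ • (g * y)) * k ^ 2) := by
  unfold QC at h2 h3
  rw [one_smul] at h2 h3
  have h5 : k ^ 2 * g = g * k ^ 2 := by
    rw [pow_two, mul_assoc, h3, ← mul_assoc, h3, mul_assoc]
  have h7 : e * (x * g) = x * g * e + q • (y * g * k ^ 2) := by
    rw [← mul_assoc, ih, add_mul, smul_mul_assoc, mul_assoc, h2, mul_assoc, h5, mul_assoc,
      mul_assoc]
  have h8 : e * (g * x) = g * x * e + q • (g * y * k ^ 2) := by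
    rw [← mul_assoc, h2, mul_assoc, ih, mul_add, mul_smul_comm, mul_assoc, mul_assoc]
  rw [mul_sub, mul_smul_comm, mul_smul_comm, h7, h8, sub_mul, sub_mul]
  simp only [smul_mul_assoc]
  module

end generic

section relations
variable (F : Type) [Field F] (N : ℕ)

lemma qq_ne : qq F ≠ 0 := RatFunc.X_ne_zero

lemma vv_ne : vv F ≠ 0 := pow_ne_zero _ (qq_ne F)

lemma vv_sub_ne : vv F - (vv F)⁻¹ ≠ 0 := by
  intro h
  have hv := vv_ne F
  have h : qq F ^ 4 = 1 := by
    have h3 : vv F * vv F = 1 := by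
      nth_rewrite 2 [sub_eq_zero.mp h]
      exact mul_inv_cancel₀ hv
    rw [← h3, vv]; ring
  have h' : algebraMap (Polynomial F) (RatFunc F) (Polynomial.X ^ 4) =
      algebraMap (Polynomial F) (RatFunc F) 1 := by
    simpa [qq, RatFunc.algebraMap_X] using h
  have := RatFunc.algebraMap_injective F h'
  have := congrArg Polynomial.natDegree this
  simp at this

lemma gen_rel {x y} (h : UqRel F N x y) :
    RingQuot.mkAlgHom (kk F) (UqRel F N) x = RingQuot.mkAlgHom (kk F) (UqRel F N) y :=
  RingQuot.mkAlgHom_rel _ h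

lemma kgen_kinvgen (i : ℕ) (h : 1 ≤ i ∧ i ≤ N) : kgen F N i * kinvgen F N i = 1 := by
  have := gen_rel F N (UqRel.kkinv ⟨i - 1, by omega⟩)
  simpa [kgen, kinvgen, h, gen] using this

lemma kinvgen_kgen (i : ℕ) (h : 1 ≤ i ∧ i ≤ N) : kinvgen F N i * kgen F N i = 1 := by
  have := gen_rel F N (UqRel.kinvk ⟨i - 1, by omega⟩)
  simpa [kgen, kinvgen, h, gen] using this

lemma kf_QC (i j : ℕ) : QC (qq F ^ (-cartan i j)) (kgen F N i) (fgen F N j) := by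
  by_cases hi : 1 ≤ i ∧ i ≤ N
  · by_cases hj : 1 ≤ j ∧ j ≤ N
    · have h0 := gen_rel F N (UqRel.kf ⟨i - 1, by omega⟩ ⟨j - 1, by omega⟩)
      have h1 : kgen F N i * fgen F N j * kinvgen F N i =
          (qq F ^ (-cartan i j)) • fgen F N j := by
        simp only [map_mul, map_smul, Nat.sub_add_cancel hi.1, Nat.sub_add_cancel hj.1] at h0
        simpa only [kgen, kinvgen, fgen, hi, hj, gen, and_self, dite_true] using h0
      unfold QC
      have h2 := congrArg (· * kgen F N i) h1
      simp only [mul_assoc, kinvgen_kgen F N i hi, mul_one, smul_mul_assoc] at h2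
      exact h2
    · have : fgen F N j = 0 := by simp only [fgen, hj, dite_false]
      rw [this]; exact QC.zero_right
  · have : kgen F N i = 0 := by simp only [kgen, hi, dite_false]
    rw [this]; exact QC.zero_left

lemma kinvf_QC (i j : ℕ) : QC (qq F ^ (cartan i j)) (kinvgen F N i) (fgen F N j) := by
  by_cases hi : 1 ≤ i ∧ i ≤ N
  · have h1 := kf_QC F N i j
    unfold QC at *
    have h2 := congrArg (fun x => kinvgen F N i * x * kinvgen F N i) h1
    simp only [mul_smul_comm, smul_mul_assoc, mul_assoc, kgen_kinvgen F N i hi, mul_one] at h2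
    simp only [← mul_assoc, kinvgen_kgen F N i hi, one_mul] at h2
    rw [h2, smul_smul, zpow_neg, mul_inv_cancel₀ (zpow_ne_zero _ (qq_ne F)), one_smul]
  · have : kinvgen F N i = 0 := by simp only [kinvgen, hi, dite_false]
    rw [this]; exact QC.zero_left

lemma ef_same (i : ℕ) (hi : 1 ≤ i ∧ i ≤ N) : egen F N i * fgen F N i =
    fgen F N i * egen F N i + (vv F - (vv F)⁻¹)⁻¹ • (kgen F N i ^ 2 - kinvgen F N i ^ 2) := by
  have h0 := gen_rel F N (UqRel.ef ⟨i - 1, by omega⟩ ⟨i - 1, by omega⟩)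
  simp only [if_true, map_mul, map_sub, map_smul, map_pow] at h0
  have h1 : (vv F)⁻¹ = qq F ^ (-2 : ℤ) := by rw [vv, zpow_neg]; norm_cast
  rw [h1, vv]
  simp only [egen, fgen, kgen, kinvgen, hi, gen, and_self, dite_true]
  rw [← h0]; abel

lemma ef_diff (i j : ℕ) (hij : i ≠ j) : QC (1 : kk F) (egen F N i) (fgen F N j) := by
  by_cases hi : 1 ≤ i ∧ i ≤ N
  · by_cases hj : 1 ≤ j ∧ j ≤ N
    · have h0 := gen_rel F N (UqRel.ef ⟨i - 1, by omega⟩ ⟨j - 1, by omega⟩)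
      have hne : ¬ ((⟨i - 1, by omega⟩ : Fin N) = ⟨j - 1, by omega⟩) := by
        intro h; have := congrArg Fin.val h; simp only at this; omega
      rw [if_neg hne] at h0
      simp only [map_mul, map_sub, map_zero] at h0
      unfold QC
      rw [one_smul]
      simp only [egen, fgen, hi, hj, gen, and_self, dite_true]
      exact sub_eq_zero.mp h0
    · have : fgen F N j = 0 := by simp only [fgen, hj, dite_false]
      rw [this]; exact QC.zero_right
  · have : egen F N i = 0 := by simp only [egen, hi, dite_false]
    rw [this]; exact QC.zero_left

lemma fword_comm (x : Uq F N) (a d : ℕ)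
    (h : ∀ j, a ≤ j → j ≤ a + d → QC (1 : kk F) x (fgen F N j)) :
    QC (1 : kk F) x (fword F N a d) := by
  induction d with
  | zero => exact h a le_rfl le_rfl
  | succ d ih =>
    have h1 := ih (fun j h1 h2 => h j h1 (by omega))
    have h2 := h (a + 1 + d) (by omega) (by omega)
    simpa [fword] using h1.comb (r := qq F) (s := (qq F)⁻¹) h2

lemma fword_left (x : Uq F N) (a d : ℕ) (c : kk F) (h0 : QC c x (fgen F N a))
    (h : ∀ j, a < j → QC (1 : kk F) x (fgen F N j)) :
    QC c x (fword F N a d) := by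
  induction d with
  | zero => exact h0
  | succ d ih =>
    have h2 := h (a + 1 + d) (by omega)
    simpa [fword] using ih.comb (r := qq F) (s := (qq F)⁻¹) h2

lemma fword_right (x : Uq F N) (a d : ℕ) (c : kk F) (h0 : QC c x (fgen F N (a + d)))
    (h : ∀ j, j < a + d → QC (1 : kk F) x (fgen F N j)) :
    QC c x (fword F N a d) := by
  cases d with
  | zero => exact h0
  | succ d =>
    have h1 := fword_comm F N x a d (fun j h1 h2 => h j (by omega))
    have h2 : QC c x (fgen F N (a + 1 + d)) := by
      rw [show a + 1 + d = a + (d + 1) by omega]; exact h0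
    simpa [fword] using h1.comb (r := qq F) (s := (qq F)⁻¹) h2

lemma cartan_zero {i j : ℕ} (h : i + 1 < j ∨ j + 1 < i) : cartan i j = 0 := by
  unfold cartan; rw [if_neg (by omega), if_neg (by omega)]

lemma cartan_near {i j : ℕ} (h : i + 1 = j ∨ j + 1 = i) : cartan i j = -1 := by
  unfold cartan; rw [if_neg (by omega), if_pos h]

lemma kf_far {i j : ℕ} (h : i + 1 < j ∨ j + 1 < i) :
    QC (1 : kk F) (kgen F N i) (fgen F N j) := by
  simpa [cartan_zero h] using kf_QC F N i j

lemma kinvf_far {i j : ℕ} (h : i + 1 < j ∨ j + 1 < i) :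
    QC (1 : kk F) (kinvgen F N i) (fgen F N j) := by
  simpa [cartan_zero h] using kinvf_QC F N i j

lemma kf_near {i j : ℕ} (h : i + 1 = j ∨ j + 1 = i) :
    QC (qq F) (kgen F N i) (fgen F N j) := by
  simpa [cartan_near h] using kf_QC F N i j

lemma kinvf_near {i j : ℕ} (h : i + 1 = j ∨ j + 1 = i) :
    QC (qq F)⁻¹ (kinvgen F N i) (fgen F N j) := by
  simpa [cartan_near h] using kinvf_QC F N i j

/-- `e_i f_{i,b} = f_{i,b} e_i + q f_{i+1,b} K_i`. -/
lemma e_fword (i d : ℕ) (hi : 1 ≤ i ∧ i ≤ N) :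
    egen F N i * fword F N i (d + 1) =
      fword F N i (d + 1) * egen F N i + qq F • (fword F N (i + 1) d * kgen F N i ^ 2) := by
  have hq := qq_ne F
  have hv := vv_sub_ne F
  induction d with
  | zero =>
    have hv' : qq F ^ 4 - 1 ≠ 0 := by
      intro h
      apply hv
      unfold vv
      field_simp
      linear_combination h
    exact gen_base (qq F) hq hv' _ _ _ _ _ (ef_same F N i hi) (ef_diff F N i (i + 1) (by omega))
      (kf_near F N (Or.inl rfl)) (kinvf_near F N (Or.inl rfl))
  | succ d ih =>
    have h2 := ef_diff F N i (i + 1 + (d + 1)) (by omega)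
    have h3 := kf_far F N (i := i) (j := i + 1 + (d + 1)) (Or.inl (by omega))
    have e1 : fword F N (i + 1) (d + 1) =
        qq F • (fword F N (i + 1) d * fgen F N (i + 1 + (d + 1))) -
        (qq F)⁻¹ • (fgen F N (i + 1 + (d + 1)) * fword F N (i + 1) d) := by
      rw [fword, show i + 1 + 1 + d = i + 1 + (d + 1) by omega]
    have e2 : fword F N i (d + 1 + 1) =
        qq F • (fword F N i (d + 1) * fgen F N (i + 1 + (d + 1))) -
        (qq F)⁻¹ • (fgen F N (i + 1 + (d + 1)) * fword F N i (d + 1)) := by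
      rw [fword]
    rw [e1, e2]
    exact gen_step (qq F) _ _ _ _ _ ih h2 h3

lemma fList_append (A B : List ℕ) (a : ℕ) :
    fList F N (A ++ a :: B) = fList F N (A ++ [a]) * fList F N (a :: B) := by
  induction A with
  | nil => simp [fList]
  | cons c A ih =>
    cases A with
    | nil => simp [fList]
    | cons d A =>
      simp only [List.cons_append, fList] at ih ⊢
      rw [ih, mul_assoc]

lemma fList_comm (x : Uq F N) (lo hi : ℕ)
    (h : ∀ j, lo ≤ j → j < hi → QC (1 : kk F) x (fgen F N j)) (l : List ℕ)
    (hs : l.Pairwise (· < ·)) (hl : ∀ j ∈ l, lo ≤ j ∧ j ≤ hi) : QC (1 : kk F) x (fList F N l) := by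
  induction l with
  | nil => exact QC.one_right
  | cons a l ih =>
    cases l with
    | nil => exact QC.one_right
    | cons b l =>
      have hab : a < b := (List.pairwise_cons.mp hs).1 b (by simp)
      have ha := hl a (by simp)
      have hb := hl b (by simp)
      have h1 := ih (List.pairwise_cons.mp hs).2 (fun j hj => hl j (by simp [hj]))
      have h2 : QC (1 : kk F) x (fij F N a b) :=
        fword_comm F N x a _ (fun j h1 h2 => h j (by omega) (by omega))
      simpa [fList] using h2.mul h1

end relations

section verma
variable (F : Type) [Field F] (N : ℕ) (lam : ℕ → ℤ)

lemma e_hw (j : ℕ) (hj : 1 ≤ j ∧ j ≤ N) : egen F N j • hw F N lam = 0 := by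
  unfold hw
  rw [← Submodule.Quotient.mk_smul, Submodule.Quotient.mk_eq_zero, smul_eq_mul, mul_one]
  exact Submodule.subset_span (Or.inl ⟨j, hj.1, hj.2, rfl⟩)

lemma k_hw0 (j : ℕ) (hj : 1 ≤ j ∧ j ≤ N) :
    kgen F N j • hw F N lam = (algebraMap (kk F) (Uq F N) (qq F ^ lam j)) • hw F N lam := by
  unfold hw
  rw [← Submodule.Quotient.mk_smul, ← Submodule.Quotient.mk_smul, smul_eq_mul, smul_eq_mul,
    mul_one, mul_one, Submodule.Quotient.eq]
  exact Submodule.subset_span (Or.inr ⟨j, hj.1, hj.2, rfl⟩)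

variable {M : Type} [AddCommGroup M] [Module (kk F) M] [Module (Uq F N) M]
  [IsScalarTower (kk F) (Uq F N) M] (w : M)

lemma kinv_hw (j : ℕ) (hj : 1 ≤ j ∧ j ≤ N)
    (k_hw : ∀ j, 1 ≤ j ∧ j ≤ N → kgen F N j • w = (qq F ^ lam j) • w) :
    kinvgen F N j • w = (qq F ^ (-lam j)) • w := by
  have h := congrArg (kinvgen F N j • ·) (k_hw j hj)
  change kinvgen F N j • kgen F N j • w = kinvgen F N j • (qq F ^ lam j) • w at h
  rw [← mul_smul, kinvgen_kgen F N j hj, one_smul, smul_smul_vec] at h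
  rw [zpow_neg, eq_inv_smul_iff₀ (zpow_ne_zero _ (qq_ne F))]
  exact h.symm

lemma pairσ_succ (i : ℕ) : pairσ lam (i + 1) = pairσ lam i + lam (i + 1) := by
  unfold pairσ
  rw [Finset.sum_Icc_succ_top (by omega)]

lemma kσ_hw (i : ℕ) (hi : i ≤ N)
    (k_hw : ∀ j, 1 ≤ j ∧ j ≤ N → kgen F N j • w = (qq F ^ lam j) • w) :
    kσ F N i • w = (qq F ^ pairσ lam i) • w := by
  induction i with
  | zero => simp [kσ, pairσ]
  | succ i ih =>
    have : kσ F N (i + 1) = kσ F N i * kgen F N (i + 1) := by simp [kσ, List.range_succ]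
    rw [this, mul_smul, k_hw (i + 1) (by omega), smul_smul_vec, ih (by omega), smul_smul,
      pairσ_succ, zpow_add₀ (qq_ne F), mul_comm]

lemma kσinv_hw (i : ℕ) (hi : i ≤ N)
    (k_hw : ∀ j, 1 ≤ j ∧ j ≤ N → kgen F N j • w = (qq F ^ lam j) • w) :
    kσinv F N i • w = (qq F ^ (-pairσ lam i)) • w := by
  induction i with
  | zero => simp [kσinv, pairσ]
  | succ i ih =>
    have : kσinv F N (i + 1) = kσinv F N i * kinvgen F N (i + 1) := by
      simp [kσinv, List.range_succ]
    rw [this, mul_smul, kinv_hw F N lam w (i + 1) (by omega) k_hw, smul_smul_vec, ih (by omega),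
      smul_smul, pairσ_succ, neg_add, zpow_add₀ (qq_ne F), mul_comm]

lemma vv_zpow (n : ℤ) : vv F ^ n = qq F ^ n * qq F ^ n := by
  rw [vv, pow_two, mul_zpow]

lemma h_hw (i : ℕ) (hi : i ≤ N)
    (k_hw : ∀ j, 1 ≤ j ∧ j ≤ N → kgen F N j • w = (qq F ^ lam j) • w) : hElt F N i • w = hval F lam i • w := by
  have hK : Kσ F N i • w = vv F ^ pairσ lam i • w := by
    rw [Kσ, pow_two, mul_smul, kσ_hw F N lam w i hi k_hw, smul_smul_vec, kσ_hw F N lam w i hi k_hw, smul_smul,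
      vv_zpow]
  have hK' : KσInv F N i • w = vv F ^ (-pairσ lam i) • w := by
    rw [KσInv, pow_two, mul_smul, kσinv_hw F N lam w i hi k_hw, smul_smul_vec, kσinv_hw F N lam w i hi k_hw,
      smul_smul, vv_zpow]
  have hv := vv_ne F
  rw [hElt]
  generalize hc : -(qq F)⁻¹ * vv F ^ (1 - (i : ℤ)) * (vv F - (vv F)⁻¹)⁻¹ = c
  have hs : ∀ (c : kk F) (x : Uq F N), x • c • w = c • x • w := fun c x => smul_smul_vec c x w
  rw [smul_assoc, mul_smul, sub_smul, smul_assoc, smul_assoc, hK, hK', smul_sub]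
  simp only [smul_smul, hs, hK']
  subst hc
  rw [hval, qint]
  simp only [smul_smul, ← sub_smul]
  congr 1
  rw [div_eq_mul_inv]
  have e1 : vv F ^ (-(pairσ lam i + (i : ℤ) - 1)) =
      vv F ^ (1 - (i : ℤ)) * vv F ^ (-pairσ lam i) := by
    rw [← zpow_add₀ hv]; congr 1; ring
  rw [e1, neg_add, zpow_add₀ hv, zpow_add₀ hv]
  ring

lemma rSet_le {I : Finset ℕ} {j : ℕ} (hj : j ∈ rSet N I) : j ≤ N := by
  simp only [rSet, Finset.mem_image, Finset.mem_sdiff, Finset.mem_Icc] at hj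
  omega

lemma list_h_hw (l : List ℕ) (hl : ∀ j ∈ l, j ≤ N)
    (k_hw : ∀ j, 1 ≤ j ∧ j ≤ N → kgen F N j • w = (qq F ^ lam j) • w) :
    (l.map (hElt F N)).prod • w = (l.map (hval F lam)).prod • w := by
  induction l with
  | nil => simp
  | cons a l ih =>
    rw [List.map_cons, List.prod_cons, mul_smul, ih (fun j hj => hl j (by simp [hj])),
      smul_smul_vec, h_hw F N lam w a (hl a (by simp)) k_hw, smul_smul, List.map_cons, List.prod_cons,
      mul_comm]

lemma HI_hw (I : Finset ℕ)
    (k_hw : ∀ j, 1 ≤ j ∧ j ≤ N → kgen F N j • w = (qq F ^ lam j) • w) : HI F N I • w = HIval F N lam I • w := by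
  rw [HI, list_h_hw F N lam w _ (fun j hj => rSet_le N ((Finset.mem_sort _).1 hj)) k_hw, HIval]
  congr 1
  rw [← List.prod_toFinset _ (Finset.sort_nodup _ _), Finset.sort_toFinset]

lemma HIval_erase (I : Finset ℕ) (i : ℕ) (hi : i ∈ I) (h1 : 1 ≤ i) (h2 : i ≤ N + 1) :
    HIval F N lam (I.erase i) = HIval F N lam I * hval F lam (i - 1) := by
  have : rSet N (I.erase i) = insert (i - 1) (rSet N I) := by
    unfold rSet
    rw [← Finset.image_insert (fun x => x - 1)]
    congr 1
    ext x
    simp only [Finset.mem_sdiff, Finset.mem_Icc, Finset.mem_erase, Finset.mem_insert]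
    by_cases hx : x = i
    · subst hx; simp [h1, h2]
    · simp [hx]
  have hn : i - 1 ∉ rSet N I := by
    simp only [rSet, Finset.mem_image, Finset.mem_sdiff, Finset.mem_Icc, not_exists, not_and]
    intro x hx hxi
    have : x = i := by omega
    subst this
    exact hx.2 hi
  rw [HIval, this, Finset.prod_insert hn, mul_comm, HIval]

lemma scalar_id (s : kk F) (m n : ℤ) :
    s * (vv F - (vv F)⁻¹)⁻¹ * (qq F ^ 2 * vv F ^ (n - 1) - (qq F)⁻¹ ^ 2 * vv F ^ (-(n - 1)))
      + s * (-(qq F)⁻¹ * vv F ^ (-(m - 1)) * qint F m) *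
        ((vv F - (vv F)⁻¹)⁻¹ * ((qq F)⁻¹ ^ 3 - qq F) * (qq F)⁻¹ ^ 2 * vv F ^ (-(n - 1)))
      + s * (-(qq F)⁻¹ * vv F ^ (-(m + n - 1)) * qint F (m + n)) * (qq F * vv F ^ (n - 1)) = 0 := by
  have hv := vv_ne F
  have hq := qq_ne F
  have hd := vv_sub_ne F
  have hd' : qq F ^ 4 - 1 ≠ 0 := by
    intro h
    apply hd
    unfold vv
    field_simp
    linear_combination h
  simp only [qint, neg_add, sub_eq_add_neg, neg_neg, zpow_add₀ hv, zpow_neg, zpow_one]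
  have hm : vv F ^ m ≠ 0 := zpow_ne_zero _ hv
  have hn : vv F ^ n ≠ 0 := zpow_ne_zero _ hv
  generalize vv F ^ m = X at *
  generalize vv F ^ n = Y at *
  have hd2 : qq F ^ 2 - (qq F ^ 2)⁻¹ ≠ 0 := hd
  have hd3 : qq F ^ 2 + -(qq F ^ 2)⁻¹ ≠ 0 := by rwa [← sub_eq_add_neg]
  unfold vv
  field_simp
  ring

end verma

lemma sort_of_sorted (S : Finset ℕ) (l : List ℕ) (hl : l.Pairwise (· < ·))
    (h : ∀ x, x ∈ S ↔ x ∈ l) : S.sort (· ≤ ·) = l := by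
  have : S = l.toFinset := by ext x; simp [h]
  rw [this]
  exact (List.toFinset_sort _ (hl.imp (fun h => Nat.ne_of_lt h))).2 (hl.imp (fun h => Nat.le_of_lt h))

lemma sort_split (S : Finset ℕ) (i lo hi : ℕ) (hlo : lo ∈ S) (hhi : hi ∈ S)
    (hi1 : lo < i) (hi2 : i + 1 < hi) (hiS : i ∈ S) (hiS' : i + 1 ∈ S) :
    ∃ (A B : List ℕ) (a b : ℕ), a < i ∧ i + 1 < b ∧ a ∈ S ∧ b ∈ S ∧
      (A ++ [a]).Pairwise (· < ·) ∧ (b :: B).Pairwise (· < ·) ∧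
      (∀ x ∈ A ++ [a], x ∈ S ∧ x ≤ a) ∧ (∀ x ∈ b :: B, x ∈ S ∧ b ≤ x) ∧
      S.sort (· ≤ ·) = A ++ a :: i :: (i + 1) :: b :: B ∧
      (S.erase i).sort (· ≤ ·) = A ++ a :: (i + 1) :: b :: B ∧
      (S.erase (i + 1)).sort (· ≤ ·) = A ++ a :: i :: b :: B := by
  obtain ⟨L1, hL1s, hL1⟩ : ∃ L : List ℕ, L.Pairwise (· < ·) ∧ ∀ x, x ∈ L ↔ x ∈ S ∧ x < i :=
    ⟨(S.filter (· < i)).sort (· ≤ ·), Finset.sortedLT_sort _ |>.pairwise, by simp⟩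
  obtain ⟨L2, hL2s, hL2⟩ : ∃ L : List ℕ, L.Pairwise (· < ·) ∧ ∀ x, x ∈ L ↔ x ∈ S ∧ i + 1 < x :=
    ⟨(S.filter (i + 1 < ·)).sort (· ≤ ·), Finset.sortedLT_sort _ |>.pairwise, by simp⟩
  rcases List.eq_nil_or_concat L1 with h | ⟨A, a, rfl⟩
  · exact absurd ((hL1 lo).2 ⟨hlo, hi1⟩) (by simp [h])
  cases L2 with
  | nil => exact absurd ((hL2 hi).2 ⟨hhi, hi2⟩) (by simp)
  | cons b B =>
    simp only [List.concat_eq_append] at *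
    have ha := (hL1 a).1 (by simp)
    have hb := (hL2 b).1 (by simp)
    refine ⟨A, B, a, b, ha.2, hb.2, ha.1, hb.1, hL1s, hL2s, ?_, ?_, ?_, ?_, ?_⟩
    · intro x hx
      refine ⟨((hL1 x).1 hx).1, ?_⟩
      rcases List.mem_append.1 hx with h | h
      · exact le_of_lt ((List.pairwise_append.1 hL1s).2.2 x h a (by simp))
      · simp at h; omega
    · intro x hx
      refine ⟨((hL2 x).1 hx).1, ?_⟩
      rcases List.mem_cons.1 hx with h | h
      · omega
      · exact le_of_lt ((List.pairwise_cons.1 hL2s).1 x h)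
    all_goals
      rw [show ∀ R : List ℕ, A ++ a :: R = (A ++ [a]) ++ R by simp]
      apply sort_of_sorted
      · rw [List.pairwise_append]
        refine ⟨hL1s, ?_, ?_⟩
        · simp only [List.pairwise_cons (a := i), List.pairwise_cons (a := i + 1)]
          refine ⟨?_, ?_⟩ <;> first
            | exact hL2s
            | (intro x hx
               have := hL2 x
               grind)
            | (refine ⟨?_, hL2s⟩
               intro x hx
               have := hL2 x
               grind)
        · intro x hx y hy
          have h1 := (hL1 x).1 hx
          have h2 := hL2 y
          grind
      · intro x
        have h1 := hL1 x
        have h2 := hL2 x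
        simp only [List.mem_append (s := A ++ [a]), List.mem_cons (a := x) (b := i),
          List.mem_cons (a := x) (b := i + 1), h1, h2, Finset.mem_erase]
        by_cases hx1 : x = i
        · subst hx1; simp [hiS]
        · by_cases hx2 : x = i + 1
          · subst hx2; simp [hiS']
          · have : x < i ∨ i + 1 < x := by omega
            tauto


section mainabs
variable (F : Type) [Field F] (N : ℕ) (lam : ℕ → ℤ)
variable {M : Type} [AddCommGroup M] [Module (kk F) M] [Module (Uq F N) M]
  [IsScalarTower (kk F) (Uq F N) M] (w : M)

lemma main_abs (i : ℕ)
    (h1 : 1 < i) (h2 : i < N) (I : Finset ℕ) (hI : I ∈ II N)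
    (hiI : i ∈ I) (hi1I : i + 1 ∈ I) (he : egen F N i • w = 0)
    (k_hw : ∀ j, 1 ≤ j ∧ j ≤ N → kgen F N j • w = (qq F ^ lam j) • w) :
    egen F N i •
      ((fSet F N I * HI F N I +
        fSet F N (I.erase i) * HI F N (I.erase i) +
        fSet F N (I.erase (i + 1)) * HI F N (I.erase (i + 1))) • w) = 0 := by
  have hI' := hI
  simp only [II, Finset.mem_filter, Finset.mem_powerset] at hI'
  obtain ⟨hsub, hone, htop⟩ := hI'
  obtain ⟨A, B, a, b, hai, hib, haS, hbS, hAs, hBs, hA, hB, e1, e2, e3⟩ :=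
    sort_split I i 1 (N + 1) hone htop h1 (by omega) hiI hi1I
  have hiN : 1 ≤ i ∧ i ≤ N := by omega
  set P := fList F N (A ++ [a]) with hPdef
  set Q := fList F N (b :: B) with hQdef
  have f1 : fSet F N I = P * fij F N a i * fgen F N i * fij F N (i + 1) b * Q := by
    rw [fSet, e1, fList_append]
    have : fij F N i (i + 1) = fgen F N i := by
      rw [fij, show i + 1 - i - 1 = 0 by omega, fword]
    simp only [fList, this, mul_assoc, hPdef, hQdef]
  have f2 : fSet F N (I.erase i) = P * fij F N a (i + 1) * fij F N (i + 1) b * Q := by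
    rw [fSet, e2, fList_append]
    simp only [fList, mul_assoc, hPdef, hQdef]
  have f3 : fSet F N (I.erase (i + 1)) = P * fij F N a i * fij F N i b * Q := by
    rw [fSet, e3, fList_append]
    simp only [fList, mul_assoc, hPdef, hQdef]
  have hQe : QC (1 : kk F) (egen F N i) Q :=
    fList_comm F N _ b (N + 1) (fun j h1 h2 => ef_diff F N i j (by omega)) _ hBs
      (fun j hj => ⟨(hB j hj).2, (Finset.mem_Icc.1 (hsub (hB j hj).1)).2⟩)
  have hQk : QC (1 : kk F) (kgen F N i) Q :=
    fList_comm F N _ b (N + 1) (fun j h1 h2 => kf_far F N (by omega)) _ hBs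
      (fun j hj => ⟨(hB j hj).2, (Finset.mem_Icc.1 (hsub (hB j hj).1)).2⟩)
  have hQk' : QC (1 : kk F) (kinvgen F N i) Q :=
    fList_comm F N _ b (N + 1) (fun j h1 h2 => kinvf_far F N (by omega)) _ hBs
      (fun j hj => ⟨(hB j hj).2, (Finset.mem_Icc.1 (hsub (hB j hj).1)).2⟩)
  have hPe : QC (1 : kk F) (egen F N i) P :=
    fList_comm F N _ 0 a (fun j h1 h2 => ef_diff F N i j (by omega)) _ hAs
      (fun j hj => ⟨Nat.zero_le _, (hA j hj).2⟩)
  have hpe : QC (1 : kk F) (egen F N i) (fij F N a i) :=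
    fword_comm F N _ a _ (fun j h1 h2 => ef_diff F N i j (by omega))
  have hge : QC (1 : kk F) (egen F N i) (fij F N (i + 1) b) :=
    fword_comm F N _ _ _ (fun j h1 h2 => ef_diff F N i j (by omega))
  have hkg : QC (qq F) (kgen F N i) (fij F N (i + 1) b) :=
    fword_left F N _ _ _ _ (kf_near F N (Or.inl rfl)) (fun j hj => kf_far F N (by omega))
  have hkg' : QC (qq F)⁻¹ (kinvgen F N i) (fij F N (i + 1) b) :=
    fword_left F N _ _ _ _ (kinvf_near F N (Or.inl rfl)) (fun j hj => kinvf_far F N (by omega))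
  have hkp : QC (qq F) (kgen F N i) (fij F N a i) :=
    fword_right F N _ _ _ _ (kf_near F N (by omega)) (fun j hj => kf_far F N (by omega))
  have hkp' : QC (qq F)⁻¹ (kinvgen F N i) (fij F N a i) :=
    fword_right F N _ _ _ _ (kinvf_near F N (by omega)) (fun j hj => kinvf_far F N (by omega))
  have hfa : fij F N a (i + 1) = qq F • (fij F N a i * fgen F N i) -
      (qq F)⁻¹ • (fgen F N i * fij F N a i) := by
    rw [fij, fij, show i + 1 - a - 1 = (i - a - 1) + 1 by omega, fword,
      show a + 1 + (i - a - 1) = i by omega]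
  have hfb : egen F N i * fij F N i b = fij F N i b * egen F N i +
      qq F • (fij F N (i + 1) b * kgen F N i ^ 2) := by
    rw [fij, fij, show b - i - 1 = (b - (i + 1) - 1) + 1 by omega]
    exact e_fword F N i _ hiN
  have hew : egen F N i • (Q • w) = 0 := by
    rw [hQe.smul_vec, he, smul_zero, smul_zero]
  have hkw : kgen F N i • kgen F N i • (Q • w) = vv F ^ lam i • (Q • w) := by
    have hk1 := k_hw i hiN
    rw [hQk.smul_vec, hk1, one_smul, smul_smul_vec, smul_smul_vec, hQk.smul_vec, hk1, one_smul,
      smul_smul_vec, smul_smul, vv_zpow]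
  have hkw' : kinvgen F N i • kinvgen F N i • (Q • w) =
      vv F ^ (-lam i) • (Q • w) := by
    have hk1 := kinv_hw F N lam w i hiN k_hw
    rw [hQk'.smul_vec, hk1, one_smul, smul_smul_vec, smul_smul_vec, hQk'.smul_vec, hk1, one_smul,
      smul_smul_vec, smul_smul, vv_zpow]
  have key := core (qq F) (vv F - (vv F)⁻¹)⁻¹ (egen F N i) (fgen F N i) (kgen F N i)
    (kinvgen F N i) (fij F N a i) (fij F N (i + 1) b) (fij F N a (i + 1)) (fij F N i b) P
    (qq_ne F) (Q • w) (vv F ^ lam i) (vv F ^ (-lam i)) (HIval F N lam I)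
    (hval F lam (i - 1)) (hval F lam i) hew hkw hkw' hPe hpe hge hkg hkg' hkp hkp'
    (ef_same F N i hiN) hfa hfb
    (by
      have := scalar_id F (HIval F N lam I) (pairσ lam (i - 1) + ((i - 1 : ℕ) : ℤ)) (lam i + 1)
      have hp : pairσ lam i = pairσ lam (i - 1) + lam i := by
        have := pairσ_succ lam (i - 1)
        rwa [Nat.sub_add_cancel hiN.1] at this
      have hc : pairσ lam i + (i : ℤ) =
          pairσ lam (i - 1) + ((i - 1 : ℕ) : ℤ) + (lam i + 1) := by
        rw [hp]; push_cast [Nat.cast_sub hiN.1]; ring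
      rw [hval, hval, hc]
      rwa [add_sub_cancel_right] at this)
  rw [add_smul, add_smul, mul_smul, mul_smul, mul_smul, HI_hw F N lam w _ k_hw, HI_hw F N lam w _ k_hw, HI_hw F N lam w _ k_hw,
    HIval_erase F N lam I i hiI hiN.1 (by omega),
    HIval_erase F N lam I (i + 1) hi1I (by omega) (by omega), f1, f2, f3, Nat.add_sub_cancel]
  have hs : ∀ (c : kk F) (x : Uq F N) (m : M), x • c • m = c • x • m := smul_smul_vec
  simp only [mul_smul P, mul_smul (P * _), mul_smul (P * _ * _), mul_smul (P * _ * _ * _), hs]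
    at key ⊢
  exact key


end mainabs

end helpers

/-- for `1 < i < N`, `I ∈ S_i` and any weight `λ`:
`e_i (f_I H_I + f_{I⁺} H_{I⁺} + f_{I⁻} H_{I⁻}) v_λ = 0` in `M(λ)`. -/
theorem stmt10 (F : Type) [Field F] (N : ℕ) (lam : ℕ → ℤ) (i : ℕ)
    (h1 : 1 < i) (h2 : i < N) (I : Finset ℕ) (hI : I ∈ II N)
    (hiI : i ∈ I) (hi1I : i + 1 ∈ I) :
    egen F N i •
      ((fSet F N I * HI F N I +
        fSet F N (I.erase i) * HI F N (I.erase i) +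
        fSet F N (I.erase (i + 1)) * HI F N (I.erase (i + 1))) • hw F N lam) = 0 := by
  let m : Module (kk F) (Verma F N lam) :=
    Module.compHom (Verma F N lam) (algebraMap (kk F) (Uq F N))
  have hsc : @IsScalarTower (kk F) (Uq F N) (Verma F N lam) _ _ m.toSMul := by
    refine @IsScalarTower.mk _ _ _ _ _ m.toSMul ?_
    intro c x y
    rw [Algebra.smul_def, mul_smul]
    rfl
  exact @main_abs F _ N lam (Verma F N lam) _ m _ hsc (hw F N lam) i h1 h2 I hI hiI hi1I
    (e_hw F N lam i (by omega)) (fun j hj => k_hw0 F N lam j hj)
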